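/- Let {p₁, ..., pₙ} be a linearly independent set of vectors in a PN space (V, ν, τ, τ*) in which strong convergence induces a topological vector space structure. Then there exist a constant c ≠ 0 and a probabilistic norm ν' on ℝ (making ℝ a strong TVS PN space) such that for all real scalars α₁, ..., αₙ: ν_{α₁p₁ + ⋯ + αₙpₙ} ≤ ν'_{c(|α₁| + ⋯ + |αₙ|)}. -/

import Mathlib

open Filter Topology

noncomputable section

/-- A distance distribution function: nondecreasing, left-continuous,
vanishing on `(-∞,0]`, bounded by `1`. -/
def DDF (F : ℝ → ℝ) : Prop :=
  Monotone F ∧ (∀ x ≤ 0, F x = 0) ∧ (∀ x, F x ≤ 1) ∧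
    ∀ x, Tendsto F (nhdsWithin x (Set.Iio x)) (nhds (F x))

/-- The unit step at `0`. -/
def eps0 : ℝ → ℝ := fun x => if x ≤ 0 then 0 else 1

/-- The unit step at `c`. -/
def epsc (c : ℝ) : ℝ → ℝ := fun x => if x ≤ c then 0 else 1

/-- `ε∞`: identically 0 on `ℝ` (value 1 only at `+∞`). -/
def epsInf : ℝ → ℝ := fun _ => 0

/-- Membership in `D⁺`: the distribution function tends to `1` at `+∞`. -/
def InDPlus (F : ℝ → ℝ) : Prop := Tendsto F atTop (nhds 1)

/-- Weak convergence of distribution functions. -/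
def WeakConv (Fn : ℕ → ℝ → ℝ) (F : ℝ → ℝ) : Prop :=
  ∀ x, ContinuousAt F x → Tendsto (fun n => Fn n x) atTop (nhds (F x))

/-- A continuous triangle function on `Δ⁺`. -/
def IsTriangleFunction (τ : (ℝ → ℝ) → (ℝ → ℝ) → (ℝ → ℝ)) : Prop :=
  (∀ F G, DDF F → DDF G → DDF (τ F G)) ∧
  (∀ F G H, DDF F → DDF G → DDF H → τ (τ F G) H = τ F (τ G H)) ∧
  (∀ F G, DDF F → DDF G → τ F G = τ G F) ∧
  (∀ F G H, DDF F → DDF G → DDF H → F ≤ G → τ F H ≤ τ G H) ∧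
  (∀ F, DDF F → τ F eps0 = F) ∧
  (∀ (Fn : ℕ → ℝ → ℝ) F G, (∀ n, DDF (Fn n)) → DDF F → DDF G →
    WeakConv Fn F → WeakConv (fun n => τ (Fn n) G) (τ F G))

/-- A probabilistic normed space `(V, ν, τ, τ*)`. -/
structure IsPNSpace (V : Type) [AddCommGroup V] [Module ℝ V]
    (ν : V → ℝ → ℝ) (τ τs : (ℝ → ℝ) → (ℝ → ℝ) → (ℝ → ℝ)) : Prop where
  ddf : ∀ p, DDF (ν p)
  tri : IsTriangleFunction τ
  tris : IsTriangleFunction τs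
  tle : ∀ F G, DDF F → DDF G → τ F G ≤ τs F G
  n1 : ∀ p, ν p = eps0 ↔ p = 0
  n2 : ∀ p, ν (-p) = ν p
  n3 : ∀ p q, τ (ν p) (ν q) ≤ ν (p + q)
  n4 : ∀ (p : V) (l : ℝ), 0 ≤ l → l ≤ 1 →
    ν p ≤ τs (ν (l • p)) (ν ((1 - l) • p))

/-- Archimedean triangle function: no idempotents besides `ε₀` and `ε∞`. -/
def IsArchimedean (τ : (ℝ → ℝ) → (ℝ → ℝ) → (ℝ → ℝ)) : Prop :=
  ∀ F, DDF F → τ F F = F → F = eps0 ∨ F = epsInf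

/-- Strong convergence of a sequence in a PN space. -/
def StrongConv {V : Type} [AddCommGroup V] (ν : V → ℝ → ℝ)
    (q : ℕ → V) (p : V) : Prop :=
  ∀ l : ℝ, 0 < l → ∀ᶠ n in atTop, ν (q n - p) l > 1 - l

/-- Strongly Cauchy sequence in a PN space. -/
def StrongCauchy {V : Type} [AddCommGroup V] (ν : V → ℝ → ℝ) (q : ℕ → V) : Prop :=
  ∀ l : ℝ, 0 < l → ∃ N, ∀ m n, N ≤ m → N ≤ n → ν (q m - q n) l > 1 - l

/-- `A` is `D`-bounded: some `G ∈ D⁺` lies below all `ν p`, `p ∈ A`. -/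
def DBounded {V : Type} (ν : V → ℝ → ℝ) (A : Set V) : Prop :=
  ∃ G : ℝ → ℝ, DDF G ∧ InDPlus G ∧ ∀ p ∈ A, G ≤ ν p

/-- `A` is `D`-compact: every sequence in `A` has a subsequence strongly
convergent to a point of `A`. -/
def DCompact {V : Type} [AddCommGroup V] (ν : V → ℝ → ℝ) (A : Set V) : Prop :=
  ∀ q : ℕ → V, (∀ n, q n ∈ A) → ∃ φ : ℕ → ℕ, StrictMono φ ∧
    ∃ p ∈ A, StrongConv ν (q ∘ φ) p

/-- `A` is closed under strong convergence of sequences. -/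
def SeqClosed {V : Type} [AddCommGroup V] (ν : V → ℝ → ℝ) (A : Set V) : Prop :=
  ∀ (q : ℕ → V) (p : V), (∀ n, q n ∈ A) → StrongConv ν q p → p ∈ A

/-- The probabilistic radius `R_A(x) = l⁻ inf {ν p x : p ∈ A}`. -/
def probRadius {V : Type} (ν : V → ℝ → ℝ) (A : Set V) (x : ℝ) : ℝ :=
  ⨆ y : Set.Iio x, ⨅ p : A, ν (p : V) (y : ℝ)

/-!
The Archimedean property forces `ν (t • p) → ε₀` as `t → 0` and, for `p ≠ 0`, `ν (t • p) → ε_∞` as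
`t → ∞`, because both limits are idempotents of `τ*`. Compactness of spheres in the coefficient
space makes this uniform and yields an increasing bijection `σ` of `ℝ` fixing `0` such that
`ν (f e) (σ ‖e‖) ≤ exp (-σ ‖e‖)`, where `f` sends coefficients to linear combinations. On `ℝ` the
functions `x ↦ min 1 (exp (x - |r|))` form a probabilistic norm for the sup-convolution, since the
parameter `|r|` adds up under it. Reparametrizing its arguments and values by `σ` turns this norm
into one that dominates `ν (f e)` at `r = ‖e‖`.
-/

namespace DDF

variable {F : ℝ → ℝ}

lemma mono (hF : DDF F) : Monotone F := hF.1

lemma eq_zero (hF : DDF F) {x : ℝ} (hx : x ≤ 0) : F x = 0 := hF.2.1 x hx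

lemma le_one (hF : DDF F) (x : ℝ) : F x ≤ 1 := hF.2.2.1 x

lemma tendsto_nhdsLT (hF : DDF F) (x : ℝ) : Tendsto F (𝓝[<] x) (𝓝 (F x)) := hF.2.2.2 x

lemma nonneg (hF : DDF F) (x : ℝ) : 0 ≤ F x := by
  rcases le_total x 0 with hx | hx
  · exact (hF.eq_zero hx).ge
  · exact (hF.eq_zero le_rfl).ge.trans (hF.mono hx)

lemma exists_lt_of_lt (hF : DDF F) {x c : ℝ} (hc : c < F x) : ∃ y < x, c < F y := by
  obtain ⟨y, hcy, hyx⟩ :=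
    (((hF.tendsto_nhdsLT x).eventually_const_lt hc).and self_mem_nhdsWithin).exists
  exact ⟨y, hyx, hcy⟩

lemma of_forall_exists_lt (hmono : Monotone F) (hzero : ∀ x ≤ 0, F x = 0)
    (hone : ∀ x, F x ≤ 1) (hleft : ∀ x, ∀ c < F x, ∃ y < x, c < F y) : DDF F := by
  refine ⟨hmono, hzero, hone, fun x => tendsto_order.2 ⟨fun c hc => ?_, fun c hc => ?_⟩⟩
  · obtain ⟨y, hyx, hcy⟩ := hleft x c hc
    filter_upwards [Ioo_mem_nhdsLT hyx] with z hz using hcy.trans_le (hmono hz.1.le)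
  · filter_upwards [self_mem_nhdsWithin] with z hz using (hmono (le_of_lt hz)).trans_lt hc

lemma le_eps0 (hF : DDF F) : F ≤ eps0 := by
  intro x
  unfold eps0
  split_ifs with hx
  · exact (hF.eq_zero hx).le
  · exact hF.le_one x

lemma eq_eps0 (hF : DDF F) (h : ∀ x > 0, 1 ≤ F x) : F = eps0 := by
  refine le_antisymm hF.le_eps0 fun x => ?_
  unfold eps0
  split_ifs with hx
  · exact hF.nonneg x
  · exact h x (not_le.1 hx)

lemma iSup {ι : Type*} [Nonempty ι] {F : ι → ℝ → ℝ} (hF : ∀ i, DDF (F i)) :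
    DDF fun x => ⨆ i, F i x := by
  have hbdd (x : ℝ) : BddAbove (Set.range fun i => F i x) :=
    ⟨1, Set.forall_mem_range.2 fun i => (hF i).le_one x⟩
  refine of_forall_exists_lt (fun x y hxy => ciSup_mono (hbdd y) fun i => (hF i).mono hxy)
    (fun x hx => ?_) (fun x => ciSup_le fun i => (hF i).le_one x) fun x c hc => ?_
  · simp only [(hF _).eq_zero hx, ciSup_const]
  · obtain ⟨i, hi⟩ := exists_lt_of_lt_ciSup hc
    obtain ⟨y, hyx, hcy⟩ := (hF i).exists_lt_of_lt hi
    exact ⟨y, hyx, hcy.trans_le (le_ciSup (hbdd y) i)⟩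

end DDF

lemma epsc_of_le {c x : ℝ} (h : x ≤ c) : epsc c x = 0 := if_pos h

lemma epsc_of_lt {c x : ℝ} (h : c < x) : epsc c x = 1 := if_neg (not_le.2 h)

lemma eps0_of_pos {x : ℝ} (h : 0 < x) : eps0 x = 1 := epsc_of_lt h

lemma continuousAt_epsc {c x : ℝ} (h : c < x) : ContinuousAt (epsc c) x :=
  continuousAt_const.congr <| by
    filter_upwards [lt_mem_nhds h] with y hy using (epsc_of_lt hy).symm

lemma ddf_epsc {c : ℝ} (hc : 0 ≤ c) : DDF (epsc c) := by
  refine .of_forall_exists_lt (fun x y hxy => ?_) (fun x hx => epsc_of_le (hx.trans hc))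
    (fun x => ?_) fun x a ha => ?_
  · unfold epsc
    split_ifs <;> linarith
  · unfold epsc
    split_ifs <;> linarith
  · rcases le_or_gt x c with hx | hx
    · exact ⟨x - 1, by linarith, by rwa [epsc_of_le (by linarith), ← epsc_of_le hx]⟩
    · obtain ⟨y, hcy, hyx⟩ := exists_between hx
      exact ⟨y, hyx, by rwa [epsc_of_lt hcy, ← epsc_of_lt hx]⟩

lemma ddf_eps0 : DDF eps0 := ddf_epsc le_rfl

namespace DDF

variable {F : ℝ → ℝ} {a b : ℝ}

lemma mul_of_continuous {g : ℝ → ℝ} (hF : DDF F) (hg : Continuous g) (hmono : Monotone g)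
    (hg0 : ∀ x, 0 ≤ g x) (hg1 : ∀ x, g x ≤ 1) : DDF fun x => F x * g x :=
  ⟨hF.mono.mul hmono hF.nonneg hg0, fun x hx => by simp only [hF.eq_zero hx, zero_mul],
    fun x => mul_le_one₀ (hF.le_one x) (hg0 x) (hg1 x),
    fun x => (hF.tendsto_nhdsLT x).mul hg.continuousWithinAt⟩

lemma const_smul (hF : DDF F) (ha : 0 ≤ a) (ha1 : a ≤ 1) : DDF (a • F) := by
  have h := hF.mul_of_continuous continuous_const monotone_const (fun _ => ha) fun _ => ha1
  simp only [mul_comm _ a] at h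
  exact h

lemma smul_epsc_le (hF : DDF F) (h : a ≤ F b) : a • epsc b ≤ F := by
  intro x
  rcases le_or_gt x b with hx | hx
  · simpa [epsc_of_le hx] using hF.nonneg x
  · simpa [epsc_of_lt hx] using h.trans (hF.mono hx.le)

end DDF

lemma weakConv_const (F : ℝ → ℝ) : WeakConv (fun _ => F) F := fun _ _ => tendsto_const_nhds

lemma weakConv_eps0_iff {F : ℕ → ℝ → ℝ} (hF : ∀ n, DDF (F n)) :
    WeakConv F eps0 ↔ ∀ l > 0, ∀ᶠ n in atTop, F n l > 1 - l := by
  refine ⟨fun hw l hl => ?_, fun h x _ => ?_⟩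
  · exact (hw l (continuousAt_epsc hl)).eventually_const_lt (by rw [eps0_of_pos hl]; linarith)
  · rcases le_or_gt x 0 with hx | hx
    · simp [(hF _).eq_zero hx, ddf_eps0.eq_zero hx]
    · rw [eps0_of_pos hx]
      refine tendsto_order.2 ⟨fun c hc => ?_,
        fun c hc => .of_forall fun n => ((hF n).le_one x).trans_lt hc⟩
      filter_upwards [h (min x (1 - c)) (lt_min hx (by linarith))] with n hn
      calc c ≤ 1 - min x (1 - c) := by linarith [min_le_right x (1 - c)]
        _ < F n (min x (1 - c)) := hn
        _ ≤ F n x := (hF n).mono (min_le_left _ _)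

lemma exists_continuousAt_between {F : ℝ → ℝ} (hF : Monotone F) {a b : ℝ} (hab : a < b) :
    ∃ y, a < y ∧ y < b ∧ ContinuousAt F y := by
  obtain ⟨y, hFy, hay, hyb⟩ := (hF.countable_not_continuousAt.dense_compl ℝ).exists_between hab
  exact ⟨y, hay, hyb, not_not.1 hFy⟩

lemma WeakConv.le_of_eventually_le {Fn Gn : ℕ → ℝ → ℝ} {F G : ℝ → ℝ} (hF : DDF F) (hG : DDF G)
    (hFn : WeakConv Fn F) (hGn : WeakConv Gn G) (hle : ∀ᶠ n in atTop, Fn n ≤ Gn n) : F ≤ G := by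
  refine fun x => le_of_forall_lt fun c hc => ?_
  obtain ⟨y, hyx, hcy⟩ := hF.exists_lt_of_lt hc
  have hdense := (hF.mono.countable_not_continuousAt.union
    hG.mono.countable_not_continuousAt).dense_compl ℝ
  obtain ⟨z, hz, hyz, hzx⟩ := hdense.exists_between hyx
  obtain ⟨hFz, hGz⟩ : ContinuousAt F z ∧ ContinuousAt G z := by simpa [not_or] using hz
  calc c < F y := hcy
    _ ≤ F z := hF.mono hyz.le
    _ ≤ G z := le_of_tendsto_of_tendsto (hFn z hFz) (hGn z hGz) (hle.mono fun n hn => hn z)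
    _ ≤ G x := hG.mono hzx.le

lemma exists_weakConv_of_antitone {Fn : ℕ → ℝ → ℝ} (hFn : ∀ n, DDF (Fn n)) (hanti : Antitone Fn) :
    ∃ F, DDF F ∧ WeakConv Fn F ∧ ∀ n, F ≤ Fn n := by
  set I : ℝ → ℝ := fun x => ⨅ n, Fn n x
  have hbdd (x : ℝ) : BddBelow (Set.range fun n => Fn n x) :=
    ⟨0, Set.forall_mem_range.2 fun n => (hFn n).nonneg x⟩
  have hI_le (n : ℕ) (x : ℝ) : I x ≤ Fn n x := ciInf_le (hbdd x) n
  have hI_nonneg (x : ℝ) : 0 ≤ I x := le_ciInf fun n => (hFn n).nonneg x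
  have hI_mono : Monotone I := fun x y hxy => ciInf_mono (hbdd x) fun n => (hFn n).mono hxy
  have hle (n : ℕ) : I.leftLim ≤ Fn n := fun x => (hI_mono.leftLim_le le_rfl).trans (hI_le n x)
  refine ⟨I.leftLim, ⟨hI_mono.leftLim, fun x hx => le_antisymm ?_ ?_, fun x => ?_, fun x => ?_⟩,
    fun x hx => ?_, hle⟩
  · exact (hle 0 x).trans_eq ((hFn 0).eq_zero hx)
  · exact (hI_nonneg (x - 1)).trans (hI_mono.le_leftLim (sub_one_lt x))
  · exact (hle 0 x).trans ((hFn 0).le_one x)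
  · exact (continuousWithinAt_leftLim_Iic (hI_mono.tendsto_leftLim x)).mono Set.Iio_subset_Iic_self
  · have hI_eq : I x = I.leftLim x := by
      have hright : Tendsto I.leftLim (𝓝[>] x) (𝓝 (I.leftLim x)) :=
        hx.tendsto.mono_left nhdsWithin_le_nhds
      refine le_antisymm (ge_of_tendsto hright ?_) (hI_mono.leftLim_le le_rfl)
      filter_upwards [self_mem_nhdsWithin] with y hy using hI_mono.le_leftLim (Set.mem_Ioi.1 hy)
    exact hI_eq ▸ tendsto_atTop_ciInf (fun m n hmn => hanti hmn x) (hbdd x)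

namespace IsTriangleFunction

variable {τ : (ℝ → ℝ) → (ℝ → ℝ) → (ℝ → ℝ)} {F G H F' G' : ℝ → ℝ}

lemma ddf (hτ : IsTriangleFunction τ) (hF : DDF F) (hG : DDF G) : DDF (τ F G) := hτ.1 F G hF hG

lemma assoc (hτ : IsTriangleFunction τ) (hF : DDF F) (hG : DDF G) (hH : DDF H) :
    τ (τ F G) H = τ F (τ G H) := hτ.2.1 F G H hF hG hH

lemma comm (hτ : IsTriangleFunction τ) (hF : DDF F) (hG : DDF G) : τ F G = τ G F :=
  hτ.2.2.1 F G hF hG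

lemma mono_left (hτ : IsTriangleFunction τ) (hF : DDF F) (hG : DDF G) (hH : DDF H) (h : F ≤ G) :
    τ F H ≤ τ G H := hτ.2.2.2.1 F G H hF hG hH h

lemma apply_eps0 (hτ : IsTriangleFunction τ) (hF : DDF F) : τ F eps0 = F := hτ.2.2.2.2.1 F hF

lemma weakConv (hτ : IsTriangleFunction τ) {Fn : ℕ → ℝ → ℝ} (hFn : ∀ n, DDF (Fn n))
    (hF : DDF F) (hG : DDF G) (hw : WeakConv Fn F) : WeakConv (fun n => τ (Fn n) G) (τ F G) :=
  hτ.2.2.2.2.2 Fn F G hFn hF hG hw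

lemma mono (hτ : IsTriangleFunction τ) (hF : DDF F) (hG : DDF G) (hF' : DDF F') (hG' : DDF G')
    (hFF' : F ≤ F') (hGG' : G ≤ G') : τ F G ≤ τ F' G' :=
  calc τ F G ≤ τ F' G := hτ.mono_left hF hF' hG hFF'
    _ = τ G F' := hτ.comm hF' hG
    _ ≤ τ G' F' := hτ.mono_left hG hG' hF' hGG'
    _ = τ F' G' := hτ.comm hG' hF'

lemma le_left (hτ : IsTriangleFunction τ) (hF : DDF F) (hG : DDF G) : τ F G ≤ F :=
  (hτ.mono hF hG hF ddf_eps0 le_rfl hG.le_eps0).trans_eq (hτ.apply_eps0 hF)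

lemma weakConv_right_eps0 (hτ : IsTriangleFunction τ) {Gn : ℕ → ℝ → ℝ} (hF : DDF F)
    (hGn : ∀ n, DDF (Gn n)) (hw : WeakConv Gn eps0) : WeakConv (fun n => τ F (Gn n)) F := by
  have h := hτ.weakConv hGn ddf_eps0 hF hw
  rw [hτ.comm ddf_eps0 hF, hτ.apply_eps0 hF] at h
  simpa only [hτ.comm hF (hGn _)] using h

lemma weakConv_eps0 (hτ : IsTriangleFunction τ) {Fn Gn : ℕ → ℝ → ℝ} (hFn : ∀ n, DDF (Fn n))
    (hGn : ∀ n, DDF (Gn n)) (hF : WeakConv Fn eps0) (hG : WeakConv Gn eps0) :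
    WeakConv (fun n => τ (Fn n) (Gn n)) eps0 := by
  -- Continuity is separate in each argument, so `Fn n` is first replaced by a fixed minorant.
  refine (weakConv_eps0_iff fun n => hτ.ddf (hFn n) (hGn n)).2 fun l hl => ?_
  set a : ℝ := max 0 (1 - l / 2)
  have hS : DDF (a • epsc (l / 2)) := (ddf_epsc (by positivity)).const_smul (le_max_left _ _)
    (max_le zero_le_one (by linarith))
  have hlim : Tendsto (fun n => τ (a • epsc (l / 2)) (Gn n) l) atTop (𝓝 a) := by
    have hl2 : l / 2 < l := half_lt_self hl
    simpa [epsc_of_lt hl2] using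
      hτ.weakConv_right_eps0 hS hGn hG l ((continuousAt_epsc hl2).const_smul a)
  have ha : 1 - l < a := lt_max_of_lt_right (by linarith)
  filter_upwards [hlim.eventually_const_lt ha,
    (weakConv_eps0_iff hFn).1 hF (l / 2) (half_pos hl)] with n hn hFn_gt
  refine hn.trans_le (hτ.mono_left hS (hFn n) (hGn n) ((hFn n).smul_epsc_le ?_) l)
  exact max_le ((hFn n).nonneg _) hFn_gt.le

-- Passing to the limit in one argument at a time, with the other frozen at an earlier index.
lemma le_self_of_antitone (hτ : IsTriangleFunction τ) {Fn : ℕ → ℝ → ℝ} (hFn : ∀ n, DDF (Fn n))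
    (hF : DDF F) (hanti : Antitone Fn) (hw : WeakConv Fn F)
    (hstep : ∀ n, Fn (n + 1) ≤ τ (Fn n) (Fn n)) : F ≤ τ F F := by
  have hle (m : ℕ) : F ≤ τ F (Fn m) := by
    refine WeakConv.le_of_eventually_le hF (hτ.ddf hF (hFn m))
      (fun x hx => (hw x hx).comp (tendsto_add_atTop_nat 1)) (hτ.weakConv hFn hF (hFn m) hw) ?_
    filter_upwards [eventually_ge_atTop m] with n hmn
    exact (hstep n).trans (hτ.mono (hFn n) (hFn n) (hFn n) (hFn m) le_rfl (hanti hmn))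
  refine WeakConv.le_of_eventually_le hF (hτ.ddf hF hF) (weakConv_const F)
    (hτ.weakConv hFn hF hF hw) (.of_forall fun n => ?_)
  exact (hle n).trans_eq (hτ.comm hF (hFn n))

end IsTriangleFunction

/-- The triangle function `τ_Π`: the sup-convolution `sup_{u + v = x} F u * G v` of two distance
distribution functions. It is the triangle function of the model space `(ℝ, truncExp |·|)`. -/
def supConv (F G : ℝ → ℝ) : ℝ → ℝ := fun x => ⨆ u : ℝ, F u * G (x - u)

section supConv

variable {F G H : ℝ → ℝ} {x y c : ℝ}

lemma supConv_le (h : ∀ u, F u * G (x - u) ≤ c) : supConv F G x ≤ c := ciSup_le h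

lemma exists_lt_of_lt_supConv (h : c < supConv F G x) : ∃ u, c < F u * G (x - u) :=
  exists_lt_of_lt_ciSup h

lemma mul_le_supConv (hF : DDF F) (hG : DDF G) (x u : ℝ) : F u * G (x - u) ≤ supConv F G x :=
  le_ciSup (f := fun u => F u * G (x - u))
    ⟨1, Set.forall_mem_range.2 fun u => mul_le_one₀ (hF.le_one u) (hG.nonneg _) (hG.le_one _)⟩ u

lemma supConv_nonneg (hF : DDF F) (hG : DDF G) (x : ℝ) : 0 ≤ supConv F G x :=
  (mul_nonneg (hF.nonneg 0) (hG.nonneg _)).trans (mul_le_supConv hF hG x 0)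

lemma mul_eq_zero_of_notMem_Icc (hF : DDF F) (hG : DDF G) {u : ℝ} (hu : u ∉ Set.Icc 0 x) :
    F u * G (x - u) = 0 := by
  rcases lt_or_ge u 0 with h | h
  · rw [hF.eq_zero h.le, zero_mul]
  · have hxu : x < u := not_le.1 fun hux => hu ⟨h, hux⟩
    rw [hG.eq_zero (by linarith), mul_zero]

lemma supConv_le_mul (hF : DDF F) (hG : DDF G) (x : ℝ) : supConv F G x ≤ F x * G x := by
  refine supConv_le fun u => ?_
  by_cases hu : u ∈ Set.Icc 0 x
  · exact mul_le_mul (hF.mono hu.2) (hG.mono (by linarith [hu.1])) (hG.nonneg _) (hF.nonneg _)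
  · rw [mul_eq_zero_of_notMem_Icc hF hG hu]
    exact mul_nonneg (hF.nonneg x) (hG.nonneg x)

lemma supConv_add_le_max (hF : DDF F) (hG : DDF G) (x y : ℝ) :
    supConv F G (x + y) ≤ max (F x) (G y) := by
  refine supConv_le fun u => ?_
  rcases le_total u x with hu | hu
  · exact (mul_le_of_le_one_right (hF.nonneg u) (hG.le_one _)).trans
      (le_max_of_le_left (hF.mono hu))
  · exact (mul_le_of_le_one_left (hG.nonneg _) (hF.le_one u)).trans
      (le_max_of_le_right (hG.mono (by linarith)))

lemma ddf_supConv (hF : DDF F) (hG : DDF G) : DDF (supConv F G) := by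
  refine .of_forall_exists_lt (fun x y hxy => supConv_le fun u => ?_) (fun x hx => ?_)
    (fun x => ?_) fun x c hc => ?_
  · exact (mul_le_mul_of_nonneg_left (hG.mono (by linarith)) (hF.nonneg u)).trans
      (mul_le_supConv hF hG y u)
  · refine le_antisymm ((supConv_le_mul hF hG x).trans_eq ?_) (supConv_nonneg hF hG x)
    rw [hF.eq_zero hx, zero_mul]
  · exact (supConv_le_mul hF hG x).trans (mul_le_one₀ (hF.le_one x) (hG.nonneg x) (hG.le_one x))
  · obtain ⟨u, hu⟩ := exists_lt_of_lt_supConv hc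
    have hleft : Tendsto (fun y => F u * G (y - u)) (𝓝[<] x) (𝓝 (F u * G (x - u))) := by
      refine ((hG.tendsto_nhdsLT (x - u)).comp (tendsto_nhdsWithin_iff.2 ⟨?_, ?_⟩)).const_mul (F u)
      · exact (continuous_sub_right u).continuousWithinAt
      · filter_upwards [self_mem_nhdsWithin] with y hy using sub_lt_sub_right hy u
    obtain ⟨y, hcy, hyx⟩ := ((hleft.eventually_const_lt hu).and self_mem_nhdsWithin).exists
    exact ⟨y, hyx, hcy.trans_le (mul_le_supConv hF hG y u)⟩

lemma supConv_comm (F G : ℝ → ℝ) : supConv F G = supConv G F := by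
  funext x
  refine (Equiv.subLeft x).iSup_congr fun u => ?_
  rw [Equiv.subLeft_apply, sub_sub_cancel, mul_comm]

lemma supConv_supConv_le (hF : DDF F) (hG : DDF G) (hH : DDF H) :
    supConv (supConv F G) H ≤ supConv F (supConv G H) := by
  refine fun x => supConv_le fun u => ?_
  rw [supConv, Real.iSup_mul_of_nonneg (hH.nonneg _)]
  refine ciSup_le fun w => ?_
  calc F w * G (u - w) * H (x - u)
      = F w * (G (u - w) * H (x - w - (u - w))) := by rw [mul_assoc, sub_sub_sub_cancel_right]
    _ ≤ F w * supConv G H (x - w) :=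
      mul_le_mul_of_nonneg_left (mul_le_supConv hG hH _ _) (hF.nonneg w)
    _ ≤ supConv F (supConv G H) x := mul_le_supConv hF (ddf_supConv hG hH) x w

lemma supConv_assoc (hF : DDF F) (hG : DDF G) (hH : DDF H) :
    supConv (supConv F G) H = supConv F (supConv G H) := by
  refine le_antisymm (supConv_supConv_le hF hG hH) ?_
  calc supConv F (supConv G H) = supConv (supConv H G) F := by
        rw [supConv_comm F, supConv_comm G H]
    _ ≤ supConv H (supConv G F) := supConv_supConv_le hH hG hF
    _ = supConv (supConv F G) H := by rw [supConv_comm H, supConv_comm G F]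

lemma supConv_mono_left (hG : DDF G) (hH : DDF H) (h : F ≤ G) : supConv F H ≤ supConv G H :=
  fun x => supConv_le fun u =>
    (mul_le_mul_of_nonneg_right (h u) (hH.nonneg _)).trans (mul_le_supConv hG hH x u)

lemma supConv_eps0 (hF : DDF F) : supConv F eps0 = F := by
  refine le_antisymm (fun x => ?_) fun x => le_of_forall_lt fun c hc => ?_
  · exact (supConv_le_mul hF ddf_eps0 x).trans
      (mul_le_of_le_one_right (hF.nonneg x) (ddf_eps0.le_one x))
  · obtain ⟨y, hyx, hcy⟩ := hF.exists_lt_of_lt hc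
    have h := mul_le_supConv hF ddf_eps0 x y
    rw [eps0_of_pos (sub_pos.2 hyx), mul_one] at h
    exact hcy.trans_le h

variable {Fn : ℕ → ℝ → ℝ}

lemma eventually_lt_supConv (hFn : ∀ n, DDF (Fn n)) (hF : DDF F) (hG : DDF G)
    (hw : WeakConv Fn F) (hc : c < supConv F G x) : ∀ᶠ n in atTop, c < supConv (Fn n) G x := by
  obtain ⟨u, hu⟩ := exists_lt_of_lt_supConv hc
  have hleft : Tendsto (fun v => F v * G (x - u)) (𝓝[<] u) (𝓝 (F u * G (x - u))) :=
    (hF.tendsto_nhdsLT u).mul_const _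
  obtain ⟨v, hcv, hvu⟩ := ((hleft.eventually_const_lt hu).and self_mem_nhdsWithin).exists
  obtain ⟨z, hvz, hzu, hz⟩ := exists_continuousAt_between hF.mono hvu
  have hcz : c < F z * G (x - u) :=
    hcv.trans_le (mul_le_mul_of_nonneg_right (hF.mono hvz.le) (hG.nonneg _))
  filter_upwards [((hw z hz).mul_const _).eventually_const_lt hcz] with n hn
  calc c < Fn n z * G (x - u) := hn
    _ ≤ Fn n z * G (x - z) :=
      mul_le_mul_of_nonneg_left (hG.mono (by linarith)) ((hFn n).nonneg z)
    _ ≤ supConv (Fn n) G x := mul_le_supConv (hFn n) hG x z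

lemma eventually_mul_lt_of_supConv_lt (hFn : ∀ n, DDF (Fn n)) (hF : DDF F) (hG : DDF G)
    (hw : WeakConv Fn F) (hxy : x < y) (hc : supConv F G y < c) (u : ℝ) :
    ∀ᶠ z in atTop ×ˢ 𝓝 u, Fn z.1 z.2 * G (x - z.2) < c := by
  set δ : ℝ := (y - x) / 2 with hδ
  have hδ_pos : 0 < δ := by linarith
  obtain ⟨b, hub, hbδ, hb⟩ := exists_continuousAt_between hF.mono (lt_add_of_pos_right u hδ_pos)
  have hlt : F b * G (x - u + δ) < c :=
    calc F b * G (x - u + δ) ≤ F b * G (y - b) :=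
          mul_le_mul_of_nonneg_left (hG.mono (by linarith)) (hF.nonneg b)
      _ ≤ supConv F G y := mul_le_supConv hF hG y b
      _ < c := hc
  filter_upwards [(((hw b hb).mul_const _).eventually_lt_const hlt).prod_mk
    (Ioo_mem_nhds (sub_lt_self u hδ_pos) hub)] with ⟨n, w⟩ ⟨hn, hwu, hwb⟩
  exact (mul_le_mul ((hFn n).mono hwb.le) (hG.mono (by linarith)) (hG.nonneg _)
    ((hFn n).nonneg _)).trans_lt hn

lemma eventually_supConv_lt (hFn : ∀ n, DDF (Fn n)) (hF : DDF F) (hG : DDF G)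
    (hw : WeakConv Fn F) (hx : ContinuousAt (supConv F G) x) (hc : supConv F G x < c) :
    ∀ᶠ n in atTop, supConv (Fn n) G x < c := by
  obtain ⟨c', hxc', hc'c⟩ := exists_between hc
  obtain ⟨y, hyc', hxy⟩ : ∃ y, supConv F G y < c' ∧ x < y :=
    (((hx.tendsto.eventually_lt_const hxc').filter_mono nhdsWithin_le_nhds).and
      (self_mem_nhdsWithin (s := Set.Ioi x))).exists
  have hIcc : ∀ᶠ n in atTop, ∀ u ∈ Set.Icc 0 x, Fn n u * G (x - u) < c' := by
    filter_upwards [Eventually.curry (isCompact_Icc.mem_prod_nhdsSet_of_forall fun u _ =>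
      eventually_mul_lt_of_supConv_lt hFn hF hG hw hxy hyc' u)] with n hn
    exact hn.self_of_nhdsSet
  filter_upwards [hIcc] with n hn
  refine (supConv_le fun u => ?_).trans_lt hc'c
  by_cases hu : u ∈ Set.Icc 0 x
  · exact (hn u hu).le
  · rw [mul_eq_zero_of_notMem_Icc (hFn n) hG hu]
    exact (supConv_nonneg hF hG x).trans hxc'.le

lemma isTriangleFunction_supConv : IsTriangleFunction supConv :=
  ⟨fun _ _ => ddf_supConv, fun _ _ _ => supConv_assoc, fun _ _ _ _ => supConv_comm _ _,
    fun _ _ _ _ => supConv_mono_left, fun _ => supConv_eps0, fun _ _ _ hFn hF hG hw _ hx =>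
      tendsto_order.2 ⟨fun _ => eventually_lt_supConv hFn hF hG hw,
        fun _ => eventually_supConv_lt hFn hF hG hw hx⟩⟩

lemma isArchimedean_supConv : IsArchimedean supConv := by
  intro F hF hidem
  have hdouble (x : ℝ) : F (2 * x) ≤ F x := by
    have h := supConv_add_le_max hF hF x x
    rwa [hidem, max_self, ← two_mul] at h
  have hpow (x : ℝ) (k : ℕ) : F (2 ^ k * x) ≤ F x := by
    induction k with
    | zero => simp
    | succ k ih =>
      rw [pow_succ', mul_assoc]
      exact (hdouble _).trans ih
  by_cases hone : ∀ x > 0, 1 ≤ F x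
  · exact .inl (hF.eq_eps0 hone)
  push Not at hone
  obtain ⟨x, hx, hFx⟩ := hone
  have hzero : F x = 0 := by
    have h := supConv_le_mul hF hF x
    rw [hidem] at h
    nlinarith [hF.nonneg x]
  refine .inr (funext fun y => le_antisymm ?_ (hF.nonneg y))
  obtain ⟨k, hk⟩ := pow_unbounded_of_one_lt (y / x) one_lt_two
  calc F y ≤ F (2 ^ k * x) := hF.mono ((div_lt_iff₀ hx).1 hk).le
    _ ≤ F x := hpow x k
    _ = 0 := hzero

end supConv

/-- The one-parameter family `x ↦ min 1 (exp (x - s))` on `x > 0`, additive under `supConv` for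
`s ≥ 0`. It is written with `min` inside `exp` so that the additivity becomes homogeneity of
`min 0`. -/
def truncExp (s : ℝ) : ℝ → ℝ := fun x => eps0 x * Real.exp (min 0 (x - s))

section truncExp

variable {s t x : ℝ}

lemma truncExp_of_pos (hx : 0 < x) : truncExp s x = Real.exp (min 0 (x - s)) := by
  rw [truncExp, eps0_of_pos hx, one_mul]

lemma ddf_truncExp (s : ℝ) : DDF (truncExp s) :=
  ddf_eps0.mul_of_continuous (by fun_prop)
    (fun _ _ hxy => Real.exp_le_exp.2 (min_le_min_left 0 (sub_le_sub_right hxy s)))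
    (fun _ => (Real.exp_pos _).le) fun _ => Real.exp_le_one_iff.2 (min_le_left _ _)

lemma truncExp_anti : Antitone truncExp := fun _ _ hst x =>
  mul_le_mul_of_nonneg_left
    (Real.exp_le_exp.2 (min_le_min_left 0 (sub_le_sub_left hst x))) (ddf_eps0.nonneg x)

lemma truncExp_eq_eps0_iff (hs : 0 ≤ s) : truncExp s = eps0 ↔ s = 0 := by
  refine ⟨fun h => le_antisymm (not_lt.1 fun hpos => ?_) hs, ?_⟩
  · have hhalf := congrFun h (s / 2)
    rw [truncExp_of_pos (half_pos hpos), eps0_of_pos (half_pos hpos), Real.exp_eq_one_iff,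
      min_eq_left_iff] at hhalf
    linarith
  · rintro rfl
    refine (ddf_truncExp 0).eq_eps0 fun x hx => ?_
    rw [truncExp_of_pos hx, sub_zero, min_eq_left hx.le, Real.exp_zero]

lemma truncExp_ne_epsInf (s : ℝ) : truncExp s ≠ epsInf := fun h => by
  have h1 : truncExp s 1 = 0 := congrFun h 1
  rw [truncExp_of_pos one_pos] at h1
  exact (Real.exp_pos _).ne' h1

lemma supConv_truncExp_le (s t : ℝ) : supConv (truncExp s) (truncExp t) ≤ truncExp (s + t) := by
  refine fun x => supConv_le fun u => ?_
  rcases le_or_gt u 0 with hu | hu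
  · rw [(ddf_truncExp s).eq_zero hu, zero_mul]
    exact (ddf_truncExp _).nonneg x
  rcases le_or_gt (x - u) 0 with hv | hv
  · rw [(ddf_truncExp t).eq_zero hv, mul_zero]
    exact (ddf_truncExp _).nonneg x
  rw [truncExp_of_pos hu, truncExp_of_pos hv, truncExp_of_pos (by linarith), ← Real.exp_add]
  refine Real.exp_le_exp.2 (le_min ?_ ?_)
  · exact add_nonpos (min_le_left _ _) (min_le_left _ _)
  · linarith [min_le_right 0 (u - s), min_le_right 0 (x - u - t)]

-- For `s, t > 0` the supremum is attained by splitting `x` in the ratio `s : t`.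
lemma truncExp_add_le_supConv (hs : 0 ≤ s) (ht : 0 ≤ t) :
    truncExp (s + t) ≤ supConv (truncExp s) (truncExp t) := by
  have hzero : truncExp 0 = eps0 := (truncExp_eq_eps0_iff le_rfl).2 rfl
  rcases hs.eq_or_lt with rfl | hs
  · rw [hzero, supConv_comm, supConv_eps0 (ddf_truncExp t), zero_add]
  rcases ht.eq_or_lt with rfl | ht
  · rw [hzero, supConv_eps0 (ddf_truncExp s), add_zero]
  intro x
  rcases le_or_gt x 0 with hx | hx
  · rw [(ddf_truncExp _).eq_zero hx]
    exact supConv_nonneg (ddf_truncExp s) (ddf_truncExp t) x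
  have hexponent : min 0 (s / (s + t) * x - s) + min 0 (t / (s + t) * x - t) =
      min 0 (x - (s + t)) := by
    have hscale {r : ℝ} (hr : 0 < r) :
        min 0 (r / (s + t) * x - r) = r / (s + t) * min 0 (x - (s + t)) := by
      rw [mul_min_of_nonneg _ _ (by positivity), mul_zero]
      congr 1
      field_simp
    rw [hscale hs, hscale ht, ← add_mul, ← add_div, div_self (by positivity), one_mul]
  have hsub : x - s / (s + t) * x = t / (s + t) * x := by field_simp; ring
  have h := mul_le_supConv (ddf_truncExp s) (ddf_truncExp t) x (s / (s + t) * x)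
  rwa [hsub, truncExp_of_pos (by positivity), truncExp_of_pos (by positivity), ← Real.exp_add,
    hexponent, ← truncExp_of_pos hx] at h

lemma isPNSpace_truncExp_abs : IsPNSpace ℝ (fun r => truncExp |r|) supConv supConv where
  ddf r := ddf_truncExp |r|
  tri := isTriangleFunction_supConv
  tris := isTriangleFunction_supConv
  tle _ _ _ _ := le_rfl
  n1 r := (truncExp_eq_eps0_iff (abs_nonneg r)).trans abs_eq_zero
  n2 r := by simp only [abs_neg]
  n3 r s := (supConv_truncExp_le |r| |s|).trans (truncExp_anti (abs_add_le r s))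
  n4 r l hl hl1 := by
    have habs : |r| = |l • r| + |(1 - l) • r| := by
      rw [smul_eq_mul, smul_eq_mul, abs_mul, abs_mul, abs_of_nonneg hl,
        abs_of_nonneg (sub_nonneg.2 hl1), ← add_mul, add_sub_cancel, one_mul]
    rw [habs]
    exact truncExp_add_le_supConv (abs_nonneg _) (abs_nonneg _)

end truncExp

/-- Reparametrization of a function `F` by order automorphisms `φ` of the argument axis and `ψ` of
the value axis. It acts on distance distribution functions as soon as `φ` fixes `0` and `ψ` fixes
`0` and `1`. -/
def reparam (φ ψ : ℝ ≃o ℝ) (F : ℝ → ℝ) : ℝ → ℝ := fun x => ψ (F (φ x))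

/-- The operation obtained from `τ` by transport of structure along `reparam φ ψ`. -/
def reparamTriangle (φ ψ : ℝ ≃o ℝ) (τ : (ℝ → ℝ) → (ℝ → ℝ) → (ℝ → ℝ)) (F G : ℝ → ℝ) : ℝ → ℝ :=
  reparam φ ψ (τ (reparam φ.symm ψ.symm F) (reparam φ.symm ψ.symm G))

section reparam

variable {φ ψ : ℝ ≃o ℝ} {F G : ℝ → ℝ} {τ τs : (ℝ → ℝ) → (ℝ → ℝ) → (ℝ → ℝ)}

lemma reparam_symm_reparam (φ ψ : ℝ ≃o ℝ) (F : ℝ → ℝ) :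
    reparam φ.symm ψ.symm (reparam φ ψ F) = F := by
  funext x
  rw [reparam, reparam, φ.apply_symm_apply, ψ.symm_apply_apply]

lemma reparam_reparam_symm (φ ψ : ℝ ≃o ℝ) (F : ℝ → ℝ) :
    reparam φ ψ (reparam φ.symm ψ.symm F) = F :=
  reparam_symm_reparam φ.symm ψ.symm F

lemma reparam_mono (φ ψ : ℝ ≃o ℝ) : Monotone (reparam φ ψ) := fun _ _ h x => ψ.monotone (h (φ x))

lemma reparam_injective (φ ψ : ℝ ≃o ℝ) : Function.Injective (reparam φ ψ) :=
  Function.LeftInverse.injective (reparam_symm_reparam φ ψ)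

lemma reparamTriangle_reparam (φ ψ : ℝ ≃o ℝ) (τ : (ℝ → ℝ) → (ℝ → ℝ) → (ℝ → ℝ)) (F G : ℝ → ℝ) :
    reparamTriangle φ ψ τ (reparam φ ψ F) (reparam φ ψ G) = reparam φ ψ (τ F G) := by
  simp only [reparamTriangle, reparam_symm_reparam]

lemma orderIso_symm_apply_of_fixed {a : ℝ} (h : φ a = a) : φ.symm a = a :=
  (OrderIso.symm_apply_eq φ).2 h.symm

protected lemma DDF.reparam (hF : DDF F) (hφ0 : φ 0 = 0) (hψ0 : ψ 0 = 0) (hψ1 : ψ 1 = 1) :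
    DDF (reparam φ ψ F) := by
  refine .of_forall_exists_lt (fun x y hxy => ψ.monotone (hF.mono (φ.monotone hxy)))
    (fun x hx => ?_) (fun x => (ψ.monotone (hF.le_one _)).trans_eq hψ1) fun x c hc => ?_
  · have hφx : φ x ≤ 0 := (φ.monotone hx).trans_eq hφ0
    rw [reparam, hF.eq_zero hφx, hψ0]
  · obtain ⟨y, hyx, hcy⟩ := hF.exists_lt_of_lt (ψ.symm_apply_lt.2 hc)
    refine ⟨φ.symm y, φ.symm_apply_lt.2 hyx, ?_⟩
    rw [reparam, φ.apply_symm_apply]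
    exact ψ.symm_apply_lt.1 hcy

lemma reparam_eps0 (hφ0 : φ 0 = 0) (hψ0 : ψ 0 = 0) (hψ1 : ψ 1 = 1) :
    reparam φ ψ eps0 = eps0 := by
  refine (ddf_eps0.reparam hφ0 hψ0 hψ1).eq_eps0 fun x hx => ?_
  have hφx : 0 < φ x := hφ0.symm.trans_lt (φ.strictMono hx)
  rw [reparam, eps0_of_pos hφx, hψ1]

lemma reparam_epsInf (hψ0 : ψ 0 = 0) : reparam φ ψ epsInf = epsInf := funext fun _ => hψ0

protected lemma WeakConv.reparam {Fn : ℕ → ℝ → ℝ} (h : WeakConv Fn F) (φ ψ : ℝ ≃o ℝ) :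
    WeakConv (fun n => reparam φ ψ (Fn n)) (reparam φ ψ F) := by
  intro x hx
  have hF : ContinuousAt F (φ x) := by
    rw [← reparam_symm_reparam φ ψ F]
    refine ψ.symm.continuous.continuousAt.comp
      (ContinuousAt.comp (g := reparam φ ψ F) ?_ φ.symm.continuous.continuousAt)
    rwa [φ.symm_apply_apply]
  exact (ψ.continuous.tendsto _).comp (h _ hF)

protected lemma IsTriangleFunction.reparamTriangle (hτ : IsTriangleFunction τ) (hφ0 : φ 0 = 0)
    (hψ0 : ψ 0 = 0) (hψ1 : ψ 1 = 1) : IsTriangleFunction (reparamTriangle φ ψ τ) := by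
  have hφ0' := orderIso_symm_apply_of_fixed hφ0
  have hψ0' := orderIso_symm_apply_of_fixed hψ0
  have hψ1' := orderIso_symm_apply_of_fixed hψ1
  have hsymm {F : ℝ → ℝ} (hF : DDF F) : DDF (reparam φ.symm ψ.symm F) :=
    hF.reparam hφ0' hψ0' hψ1'
  refine ⟨fun F G hF hG => (hτ.ddf (hsymm hF) (hsymm hG)).reparam hφ0 hψ0 hψ1,
    fun F G H hF hG hH => ?_, fun F G hF hG => ?_, fun F G H hF hG hH h => ?_, fun F hF => ?_,
    fun Fn F G hFn hF hG hw => ?_⟩ <;> unfold reparamTriangle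
  · rw [reparam_symm_reparam, reparam_symm_reparam, hτ.assoc (hsymm hF) (hsymm hG) (hsymm hH)]
  · rw [hτ.comm (hsymm hF) (hsymm hG)]
  · exact reparam_mono _ _ (hτ.mono_left (hsymm hF) (hsymm hG) (hsymm hH) (reparam_mono _ _ h))
  · rw [reparam_eps0 hφ0' hψ0' hψ1', hτ.apply_eps0 (hsymm hF), reparam_reparam_symm]
  · exact (hτ.weakConv (fun n => hsymm (hFn n)) (hsymm hF) (hsymm hG) (hw.reparam _ _)).reparam _ _

protected lemma IsArchimedean.reparamTriangle (hτ : IsArchimedean τ) (hφ0 : φ 0 = 0)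
    (hψ0 : ψ 0 = 0) (hψ1 : ψ 1 = 1) : IsArchimedean (reparamTriangle φ ψ τ) := by
  intro F hF hidem
  have hidem' : τ (reparam φ.symm ψ.symm F) (reparam φ.symm ψ.symm F) =
      reparam φ.symm ψ.symm F :=
    reparam_injective φ ψ (hidem.trans (reparam_reparam_symm φ ψ F).symm)
  have hF' : DDF (reparam φ.symm ψ.symm F) := hF.reparam (orderIso_symm_apply_of_fixed hφ0)
    (orderIso_symm_apply_of_fixed hψ0) (orderIso_symm_apply_of_fixed hψ1)
  rw [← reparam_reparam_symm φ ψ F]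
  refine (hτ _ hF' hidem').imp (fun h => ?_) fun h => ?_
  · rw [h, reparam_eps0 hφ0 hψ0 hψ1]
  · rw [h, reparam_epsInf hψ0]

protected lemma IsPNSpace.reparam {V : Type} [AddCommGroup V] [Module ℝ V] {ν : V → ℝ → ℝ}
    (h : IsPNSpace V ν τ τs) (hφ0 : φ 0 = 0) (hψ0 : ψ 0 = 0) (hψ1 : ψ 1 = 1) :
    IsPNSpace V (fun p => reparam φ ψ (ν p)) (reparamTriangle φ ψ τ) (reparamTriangle φ ψ τs) where
  ddf p := (h.ddf p).reparam hφ0 hψ0 hψ1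
  tri := h.tri.reparamTriangle hφ0 hψ0 hψ1
  tris := h.tris.reparamTriangle hφ0 hψ0 hψ1
  tle F G hF hG := by
    have hsymm {F : ℝ → ℝ} (hF : DDF F) : DDF (reparam φ.symm ψ.symm F) :=
      hF.reparam (orderIso_symm_apply_of_fixed hφ0) (orderIso_symm_apply_of_fixed hψ0)
        (orderIso_symm_apply_of_fixed hψ1)
    exact reparam_mono φ ψ (h.tle _ _ (hsymm hF) (hsymm hG))
  n1 p := ((reparam_injective φ ψ).eq_iff' (reparam_eps0 hφ0 hψ0 hψ1)).trans (h.n1 p)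
  n2 p := by rw [h.n2 p]
  n3 p q := by
    rw [reparamTriangle_reparam]
    exact reparam_mono φ ψ (h.n3 p q)
  n4 p l hl hl1 := by
    rw [reparamTriangle_reparam]
    exact reparam_mono φ ψ (h.n4 p l hl hl1)

end reparam

/-- The order automorphism of the value axis induced by an order automorphism `σ` of the exponents:
`exp (-t) ↦ exp (-σ t)`, extended by the identity to the nonpositive numbers. -/
def expConj (σ : ℝ ≃o ℝ) : ℝ ≃o ℝ :=
  StrictMono.orderIsoOfRightInverse
    (fun y => if y ≤ 0 then y else Real.exp (-σ (-Real.log y)))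
    (fun x y hxy => by
      beta_reduce
      split_ifs with hx hy hy
      · exact hxy
      · exact hx.trans_lt (Real.exp_pos _)
      · exact absurd (hxy.le.trans hy) hx
      · exact Real.exp_lt_exp.2 (neg_lt_neg (σ.strictMono (neg_lt_neg
          (Real.log_lt_log (not_le.1 hx) hxy)))))
    (fun y => if y ≤ 0 then y else Real.exp (-σ.symm (-Real.log y)))
    (fun y => by
      by_cases hy : y ≤ 0
      · simp [hy]
      · simp [hy, Real.exp_log (not_le.1 hy), Real.exp_pos])

section expConj

variable {σ : ℝ ≃o ℝ}

lemma expConj_zero (σ : ℝ ≃o ℝ) : expConj σ 0 = 0 := if_pos le_rfl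

lemma expConj_exp_neg (σ : ℝ ≃o ℝ) (t : ℝ) : expConj σ (Real.exp (-t)) = Real.exp (-σ t) := by
  refine (if_neg (not_le.2 (Real.exp_pos (-t)))).trans ?_
  rw [Real.log_exp, neg_neg]

lemma expConj_one (hσ : σ 0 = 0) : expConj σ 1 = 1 := by
  simpa [hσ] using expConj_exp_neg σ 0

lemma DDF.le_reparam_truncExp {F : ℝ → ℝ} (hF : DDF F) (hσ : σ 0 = 0) {t : ℝ}
    (ht : F (σ t) ≤ Real.exp (-σ t)) : F ≤ reparam σ.symm (expConj σ) (truncExp t) := by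
  intro x
  rcases le_or_gt x 0 with hx | hx
  · rw [hF.eq_zero hx]
    exact ((ddf_truncExp t).reparam (orderIso_symm_apply_of_fixed hσ) (expConj_zero σ)
      (expConj_one hσ)).nonneg x
  have hx' : 0 < σ.symm x := σ.lt_symm_apply.2 (hσ.trans_lt hx)
  rw [reparam, truncExp_of_pos hx']
  rcases le_or_gt t (σ.symm x) with htx | htx
  · rw [min_eq_left (sub_nonneg.2 htx), Real.exp_zero, expConj_one hσ]
    exact hF.le_one x
  · calc F x ≤ F (σ t) := hF.mono (σ.symm_apply_lt.1 htx).le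
      _ ≤ Real.exp (-σ t) := ht
      _ = expConj σ (Real.exp (-t)) := (expConj_exp_neg σ t).symm
      _ ≤ expConj σ (Real.exp (min 0 (σ.symm x - t))) :=
        (expConj σ).monotone (Real.exp_le_exp.2 (le_min (by linarith) (by linarith)))

end expConj

section MonotoneMinorant

variable {m : ℝ → ℝ}

-- The minorant is the inf-convolution of `m` with the positive part.
lemma exists_continuous_monotone_le (hm : Monotone m) (hnonneg : ∀ t, 0 ≤ m t)
    (hpos : ∀ t > 0, 0 < m t) (htop : Tendsto m atTop atTop) :
    ∃ L : ℝ → ℝ, Continuous L ∧ Monotone L ∧ L ≤ m ∧ (∀ t > 0, 0 < L t) ∧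
      Tendsto L atTop atTop := by
  set L : ℝ → ℝ := fun t => ⨅ u, m u + max (t - u) 0
  have hL_le (t u : ℝ) : L t ≤ m u + max (t - u) 0 :=
    ciInf_le (f := fun u => m u + max (t - u) 0)
      ⟨0, Set.forall_mem_range.2 fun u => add_nonneg (hnonneg u) (le_max_right _ _)⟩ u
  have hle_L (t : ℝ) : min (m (t / 2)) (t / 2) ≤ L t := by
    refine le_ciInf fun u => ?_
    rcases le_total u (t / 2) with hu | hu
    · refine (min_le_right _ _).trans (le_add_of_nonneg_of_le (hnonneg u) ?_)
      exact le_max_of_le_left (by linarith)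
    · exact (min_le_left _ _).trans (le_add_of_le_of_nonneg (hm hu) (le_max_right _ _))
  have hlip : LipschitzWith 1 L := by
    refine .of_le_add fun s t => sub_le_iff_le_add.1 (le_ciInf fun u => ?_)
    have hsu : max (s - u) 0 ≤ max (t - u) 0 + dist s t :=
      max_le (by linarith [le_abs_self (s - t), Real.dist_eq s t, le_max_left (t - u) 0])
        (add_nonneg (le_max_right _ _) dist_nonneg)
    linarith [hL_le s u]
  have hhalf : Tendsto (fun t : ℝ => t / 2) atTop atTop := tendsto_id.atTop_div_const two_pos
  refine ⟨L, hlip.continuous, fun s t hst => le_ciInf fun u => ?_, fun t => ?_, fun t ht => ?_, ?_⟩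
  · exact (hL_le s u).trans (by gcongr)
  · simpa using hL_le t t
  · exact (lt_min (hpos _ (half_pos ht)) (half_pos ht)).trans_le (hle_L t)
  · refine tendsto_atTop_mono hle_L (tendsto_atTop.2 fun b => ?_)
    filter_upwards [(htop.comp hhalf).eventually_ge_atTop b, hhalf.eventually_ge_atTop b]
      with t hmt ht using le_min hmt ht

lemma exists_orderIso_lt_of_continuous (hcont : Continuous m) (hm : Monotone m)
    (hpos : ∀ t > 0, 0 < m t) (htop : Tendsto m atTop atTop) :
    ∃ σ : ℝ ≃o ℝ, σ 0 = 0 ∧ ∀ t > 0, σ t < m t := by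
  set f : ℝ → ℝ := fun t => min t 0 + m t * max (1 - Real.exp (-t)) 0
  have hf_of_nonpos {t : ℝ} (ht : t ≤ 0) : f t = t := by
    have hexp : 1 - Real.exp (-t) ≤ 0 := sub_nonpos.2 (Real.one_le_exp (neg_nonneg.2 ht))
    simp only [f, min_eq_left ht, max_eq_right hexp, mul_zero, add_zero]
  have hexp_pos {t : ℝ} (ht : 0 < t) : 0 < 1 - Real.exp (-t) :=
    sub_pos.2 (Real.exp_lt_one_iff.2 (neg_neg_of_pos ht))
  have hf_of_pos {t : ℝ} (ht : 0 < t) : f t = m t * (1 - Real.exp (-t)) := by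
    simp only [f, min_eq_right ht.le, max_eq_left (hexp_pos ht).le, zero_add]
  have hf_pos {t : ℝ} (ht : 0 < t) : 0 < f t := hf_of_pos ht ▸ mul_pos (hpos t ht) (hexp_pos ht)
  have hf_mono : StrictMono f := by
    intro s t hst
    rcases le_or_gt t 0 with ht | ht
    · rwa [hf_of_nonpos ht, hf_of_nonpos (hst.le.trans ht)]
    rcases le_or_gt s 0 with hs | hs
    · exact (hf_of_nonpos hs).trans_le hs |>.trans_lt (hf_pos ht)
    rw [hf_of_pos hs, hf_of_pos ht]
    exact mul_lt_mul' (hm hst.le) (sub_lt_sub_left (Real.exp_lt_exp.2 (neg_lt_neg hst)) 1)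
      (hexp_pos hs).le (hpos t ht)
  have hf_top : Tendsto f atTop atTop := by
    have hfactor : Tendsto (fun t => 1 - Real.exp (-t)) atTop (𝓝 1) := by
      simpa using (Real.tendsto_exp_neg_atTop_nhds_zero).const_sub 1
    refine (htop.atTop_mul_pos one_pos hfactor).congr' ?_
    filter_upwards [eventually_gt_atTop 0] with t ht using (hf_of_pos ht).symm
  have hf_bot : Tendsto f atBot atBot := tendsto_id.congr' <| by
    filter_upwards [eventually_le_atBot 0] with t ht using (hf_of_nonpos ht).symm
  have hf_surj : Function.Surjective f :=
    Continuous.surjective (by fun_prop) hf_top hf_bot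
  refine ⟨hf_mono.orderIsoOfSurjective f hf_surj, hf_of_nonpos le_rfl, fun t ht => ?_⟩
  calc f t = m t * (1 - Real.exp (-t)) := hf_of_pos ht
    _ < m t := mul_lt_of_lt_one_right (hpos t ht) (sub_lt_self 1 (Real.exp_pos _))

lemma exists_orderIso_lt (hm : Monotone m) (hnonneg : ∀ t, 0 ≤ m t) (hpos : ∀ t > 0, 0 < m t)
    (htop : Tendsto m atTop atTop) : ∃ σ : ℝ ≃o ℝ, σ 0 = 0 ∧ ∀ t > 0, σ t < m t := by
  obtain ⟨L, hL_cont, hL_mono, hLm, hL_pos, hL_top⟩ :=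
    exists_continuous_monotone_le hm hnonneg hpos htop
  obtain ⟨σ, hσ0, hσL⟩ := exists_orderIso_lt_of_continuous hL_cont hL_mono hL_pos hL_top
  exact ⟨σ, hσ0, fun t ht => (hσL t ht).trans_le (hLm t)⟩

end MonotoneMinorant

namespace IsPNSpace

variable {V : Type} [AddCommGroup V] [Module ℝ V] {ν : V → ℝ → ℝ}
  {τ τs : (ℝ → ℝ) → (ℝ → ℝ) → (ℝ → ℝ)}

lemma le_smul (h : IsPNSpace V ν τ τs) (p : V) {l : ℝ} (hl : 0 ≤ l) (hl1 : l ≤ 1) :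
    ν p ≤ ν (l • p) :=
  (h.n4 p l hl hl1).trans (h.tris.le_left (h.ddf _) (h.ddf _))

lemma smul_le_smul (h : IsPNSpace V ν τ τs) (p : V) {s t : ℝ} (hst : |s| ≤ |t|) :
    ν (t • p) ≤ ν (s • p) := by
  have habs (r : ℝ) : ν (r • p) = ν (|r| • p) := by
    rcases abs_choice r with hr | hr
    · rw [hr]
    · rw [hr, neg_smul, h.n2]
  rw [habs s, habs t]
  rcases (abs_nonneg t).eq_or_lt with ht | ht
  · rw [le_antisymm hst (ht ▸ abs_nonneg s)]
  · have hle := h.le_smul (|t| • p) (div_nonneg (abs_nonneg s) ht.le)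
      (div_le_one_of_le₀ hst ht.le)
    rwa [smul_smul, div_mul_cancel₀ _ ht.ne'] at hle

lemma two_mul_smul_le (h : IsPNSpace V ν τ τs) (p : V) (t : ℝ) :
    ν ((2 * t) • p) ≤ τs (ν (t • p)) (ν (t • p)) := by
  have hhalf := h.n4 ((2 * t) • p) 2⁻¹ (by norm_num) (by norm_num)
  rwa [smul_smul, smul_smul, show (1 - 2⁻¹ : ℝ) = 2⁻¹ by norm_num,
    inv_mul_cancel_left₀ two_ne_zero] at hhalf

-- By `two_mul_smul_le` the supremum is idempotent for `τs`.
lemma iSup_smul_eq_eps0 (h : IsPNSpace V ν τ τs) (harch : IsArchimedean τs) {p : V}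
    (hp : ν p ≠ epsInf) : (fun x => ⨆ t : Set.Ioi (0 : ℝ), ν ((t : ℝ) • p) x) = eps0 := by
  set F : ℝ → ℝ := fun x => ⨆ t : Set.Ioi (0 : ℝ), ν ((t : ℝ) • p) x
  have hF : DDF F := DDF.iSup fun t => h.ddf _
  have hle {t : ℝ} (ht : 0 < t) : ν (t • p) ≤ F := fun x =>
    le_ciSup (f := fun t : Set.Ioi (0 : ℝ) => ν ((t : ℝ) • p) x)
      ⟨1, Set.forall_mem_range.2 fun t => (h.ddf _).le_one x⟩ ⟨t, ht⟩
  have hidem : τs F F = F := by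
    refine le_antisymm (h.tris.le_left hF hF) fun x => ciSup_le fun t => ?_
    have ht : 0 < (t : ℝ) / 2 := half_pos t.2
    calc ν ((t : ℝ) • p) x = ν ((2 * (t / 2 : ℝ)) • p) x := by rw [mul_div_cancel₀ _ two_ne_zero]
      _ ≤ τs (ν ((t / 2 : ℝ) • p)) (ν ((t / 2 : ℝ) • p)) x := h.two_mul_smul_le p _ x
      _ ≤ τs F F x := h.tris.mono (h.ddf _) (h.ddf _) hF hF (hle ht) (hle ht) x
  refine (harch F hF hidem).resolve_right fun hF_inf => hp ?_
  refine le_antisymm ?_ fun x => (h.ddf p).nonneg x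
  simpa only [one_smul, hF_inf] using hle one_pos

lemma tendsto_smul_nhds_zero (h : IsPNSpace V ν τ τs) (harch : IsArchimedean τs) {p : V}
    (hp : ν p ≠ epsInf) {x : ℝ} (hx : 0 < x) :
    Tendsto (fun t : ℝ => ν (t • p) x) (𝓝 0) (𝓝 1) := by
  refine tendsto_order.2 ⟨fun c hc => ?_,
    fun c hc => .of_forall fun t => ((h.ddf _).le_one x).trans_lt hc⟩
  have hsup := congrFun (h.iSup_smul_eq_eps0 harch hp) x
  rw [eps0_of_pos hx] at hsup
  obtain ⟨⟨t, ht⟩, hct⟩ := exists_lt_of_lt_ciSup (hc.trans_eq hsup.symm)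
  filter_upwards [Metric.ball_mem_nhds 0 (Set.mem_Ioi.1 ht)] with s hs
  refine hct.trans_le (h.smul_le_smul p ?_ x)
  exact (mem_ball_zero_iff.1 hs).le.trans (le_abs_self t)

-- The weak limit of `ν (2 ^ k • p)` is idempotent for `τs` and different from `eps0`.
lemma weakConv_two_pow_smul (h : IsPNSpace V ν τ τs) (harch : IsArchimedean τs) {p : V}
    (hp : p ≠ 0) : WeakConv (fun k : ℕ => ν ((2 : ℝ) ^ k • p)) epsInf := by
  have hanti : Antitone fun k : ℕ => ν ((2 : ℝ) ^ k • p) := fun j k hjk =>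
    h.smul_le_smul p (abs_le_abs_of_nonneg (by positivity) (pow_le_pow_right₀ one_le_two hjk))
  obtain ⟨F, hF, hw, hle⟩ := exists_weakConv_of_antitone (fun k => h.ddf _) hanti
  have hidem : τs F F = F := by
    refine le_antisymm (h.tris.le_left hF hF)
      (h.tris.le_self_of_antitone (fun k => h.ddf _) hF hanti hw fun k => ?_)
    rw [pow_succ']
    exact h.two_mul_smul_le p _
  rcases harch F hF hidem with rfl | rfl
  · refine absurd ((h.n1 p).1 (le_antisymm (h.ddf p).le_eps0 ?_)) hp
    simpa using hle 0
  · exact hw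

lemma tendsto_smul_atTop (h : IsPNSpace V ν τ τs) (harch : IsArchimedean τs) {p : V}
    (hp : p ≠ 0) (x : ℝ) : Tendsto (fun t : ℝ => ν (t • p) x) atTop (𝓝 0) := by
  refine tendsto_order.2 ⟨fun c hc => .of_forall fun t => hc.trans_le ((h.ddf _).nonneg x),
    fun c hc => ?_⟩
  have hlim : Tendsto (fun k : ℕ => ν ((2 : ℝ) ^ k • p) x) atTop (𝓝 0) :=
    h.weakConv_two_pow_smul harch hp x continuousAt_const
  obtain ⟨k, hk⟩ := (hlim.eventually_lt_const hc).exists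
  filter_upwards [eventually_ge_atTop ((2 : ℝ) ^ k)] with t ht
  exact (h.smul_le_smul p (abs_le_abs_of_nonneg (by positivity) ht) x).trans_lt hk

lemma weakConv_eps0_add (h : IsPNSpace V ν τ τs) {q r : ℕ → V}
    (hq : WeakConv (fun k => ν (q k)) eps0) (hr : WeakConv (fun k => ν (r k)) eps0) :
    WeakConv (fun k => ν (q k + r k)) eps0 := by
  refine (weakConv_eps0_iff fun k => h.ddf _).2 fun l hl => ?_
  have hτ := h.tri.weakConv_eps0 (fun k => h.ddf _) (fun k => h.ddf _) hq hr
  filter_upwards [(weakConv_eps0_iff fun k => h.tri.ddf (h.ddf _) (h.ddf _)).1 hτ l hl] with k hk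
  exact hk.trans_le (h.n3 _ _ l)

lemma weakConv_eps0_sum (h : IsPNSpace V ν τ τs) {ι : Type*} (s : Finset ι) {q : ι → ℕ → V}
    (hq : ∀ i ∈ s, WeakConv (fun k => ν (q i k)) eps0) :
    WeakConv (fun k => ν (∑ i ∈ s, q i k)) eps0 := by
  classical
  induction s using Finset.induction_on with
  | empty =>
    simp only [Finset.sum_empty, (h.n1 0).2 rfl]
    exact weakConv_const eps0
  | insert i s hi ih =>
    simp only [Finset.sum_insert hi]
    exact h.weakConv_eps0_add (hq i (Finset.mem_insert_self i s))
      (ih fun j hj => hq j (Finset.mem_insert_of_mem hj))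

lemma weakConv_eps0_smul (h : IsPNSpace V ν τ τs) (harch : IsArchimedean τs) {p : V}
    (hp : ν p ≠ epsInf) {l : ℕ → ℝ} (hl : Tendsto l atTop (𝓝 0)) :
    WeakConv (fun k => ν (l k • p)) eps0 := by
  intro x _
  rcases le_or_gt x 0 with hx | hx
  · simp only [(h.ddf _).eq_zero hx, ddf_eps0.eq_zero hx, tendsto_const_nhds]
  · rw [eps0_of_pos hx]
    exact (h.tendsto_smul_nhds_zero harch hp hx).comp hl

lemma le_of_weakConv_sub (h : IsPNSpace V ν τ τs) {F : ℝ → ℝ} (hF : DDF F) {q : ℕ → V} {p : V}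
    (hq : WeakConv (fun k => ν (p - q k)) eps0) (hle : ∀ᶠ k in atTop, F ≤ ν (q k)) : F ≤ ν p := by
  refine WeakConv.le_of_eventually_le hF (h.ddf p)
    (h.tri.weakConv_right_eps0 hF (fun k => h.ddf _) hq) (weakConv_const _) ?_
  filter_upwards [hle] with k hk
  calc τ F (ν (p - q k)) ≤ τ (ν (q k)) (ν (p - q k)) := h.tri.mono_left hF (h.ddf _) (h.ddf _) hk
    _ ≤ ν (q k + (p - q k)) := h.n3 _ _
    _ = ν p := by rw [add_sub_cancel]

variable {E : Type*} [NormedAddCommGroup E] [NormedSpace ℝ E] {f : E →ₗ[ℝ] V} {s t : ℝ}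

section FiniteDimensional

variable [FiniteDimensional ℝ E]

lemma weakConv_eps0_map (h : IsPNSpace V ν τ τs) (harch : IsArchimedean τs)
    (hne : ∀ p, ν p ≠ epsInf) (f : E →ₗ[ℝ] V) {e : ℕ → E} (he : Tendsto e atTop (𝓝 0)) :
    WeakConv (fun k => ν (f (e k))) eps0 := by
  set b := Module.finBasis ℝ E
  have hsum (k : ℕ) : f (e k) = ∑ i, b.coord i (e k) • f (b i) := by
    simp only [← map_smul, ← map_sum, b.coord_apply, b.sum_repr]
  simp only [hsum]
  refine h.weakConv_eps0_sum _ fun i _ => h.weakConv_eps0_smul harch (hne _) ?_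
  exact ((b.coord i).continuous_of_finiteDimensional.tendsto' 0 0 (map_zero _)).comp he

lemma exists_norm_eq_forall_le (h : IsPNSpace V ν τ τs) (harch : IsArchimedean τs)
    (hne : ∀ p, ν p ≠ epsInf) (f : E →ₗ[ℝ] V) {e : ℕ → E} (he : ∀ k, ‖e k‖ = t) :
    ∃ e₀, ‖e₀‖ = t ∧ ∀ F, DDF F → ∀ c : ℝ, (∀ᶠ k in atTop, F ≤ ν (c • f (e k))) →
      F ≤ ν (c • f e₀) := by
  obtain ⟨e₀, he₀, φ, hφ, hlim⟩ :=
    (isCompact_sphere (0 : E) t).tendsto_subseq fun k => mem_sphere_zero_iff_norm.2 (he k)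
  refine ⟨e₀, mem_sphere_zero_iff_norm.1 he₀, fun F hF c hle =>
    h.le_of_weakConv_sub hF (q := fun k => c • f (e (φ k))) ?_ (hφ.tendsto_atTop.eventually hle)⟩
  have hdiff : Tendsto (fun k => c • (e₀ - e (φ k))) atTop (𝓝 0) := by
    simpa using (hlim.const_sub e₀).const_smul c
  simpa only [map_smul, map_sub, smul_sub] using h.weakConv_eps0_map harch hne f hdiff

end FiniteDimensional

/-- At every point of the image under `f` of the sphere of radius `t`, the probabilistic norm lies
at the argument `s` below the exponential profile `exp (-s)`. Comparing the argument and the value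
through one number `s` gives a condition that is monotone in `s`. -/
def DecaysAt (ν : V → ℝ → ℝ) (f : E →ₗ[ℝ] V) (t s : ℝ) : Prop :=
  ∀ e, ‖e‖ = t → ν (f e) s ≤ Real.exp (-s)

lemma decaysAt_mono (h : IsPNSpace V ν τ τs) {t' s' : ℝ} (hdec : DecaysAt ν f t s)
    (ht : 0 < t) (htt' : t ≤ t') (hs : s' ≤ s) : DecaysAt ν f t' s' := by
  intro e he
  have ht' : 0 < t' := ht.trans_le htt'
  have hnorm : ‖(t / t') • e‖ = t := by
    rw [norm_smul, he, Real.norm_of_nonneg (by positivity), div_mul_cancel₀ _ ht'.ne']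
  calc ν (f e) s' ≤ ν (f e) s := (h.ddf _).mono hs
    _ ≤ ν ((t / t') • f e) s :=
      h.le_smul (f e) (by positivity) (div_le_one_of_le₀ htt' ht'.le) s
    _ = ν (f ((t / t') • e)) s := by rw [map_smul]
    _ ≤ Real.exp (-s) := hdec _ hnorm
    _ ≤ Real.exp (-s') := Real.exp_le_exp.2 (neg_le_neg hs)

lemma exists_smul_epsc_le_of_not_decaysAt (h : IsPNSpace V ν τ τs) (hdec : ¬ DecaysAt ν f t s) :
    ∃ e, ‖e‖ = t ∧ ∀ s' ≥ s, Real.exp (-s') • epsc s' ≤ ν (f e) := by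
  unfold DecaysAt at hdec
  push Not at hdec
  obtain ⟨e, he, hlt⟩ := hdec
  refine ⟨e, he, fun s' hs => (h.ddf _).smul_epsc_le ?_⟩
  calc Real.exp (-s') ≤ Real.exp (-s) := Real.exp_le_exp.2 (neg_le_neg hs)
    _ ≤ ν (f e) s := hlt.le
    _ ≤ ν (f e) s' := (h.ddf _).mono hs

lemma ddf_exp_neg_smul_epsc (hs : 0 ≤ s) : DDF (Real.exp (-s) • epsc s) :=
  (ddf_epsc hs).const_smul (Real.exp_pos _).le (Real.exp_le_one_iff.2 (neg_nonpos.2 hs))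

section Injective

variable [FiniteDimensional ℝ E]

lemma exists_pos_decaysAt (h : IsPNSpace V ν τ τs) (harch : IsArchimedean τs)
    (hne : ∀ p, ν p ≠ epsInf) (hf : Function.Injective f) (ht : 0 < t) :
    ∃ s > 0, DecaysAt ν f t s := by
  by_contra! hcon
  obtain ⟨s, hs_anti, hs_pos, hs_lim⟩ := exists_seq_strictAnti_tendsto (0 : ℝ)
  choose e he hle using fun k => h.exists_smul_epsc_le_of_not_decaysAt (hcon (s k) (hs_pos k))
  obtain ⟨e₀, he₀, hclosed⟩ := h.exists_norm_eq_forall_le harch hne f he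
  have hle₀ (m : ℕ) : Real.exp (-s m) • epsc (s m) ≤ ν (f e₀) := by
    refine one_smul ℝ (f e₀) ▸ hclosed _ (ddf_exp_neg_smul_epsc (hs_pos m).le) 1 ?_
    filter_upwards [eventually_ge_atTop m] with k hmk
    rw [one_smul]
    exact hle k (s m) (hs_anti.antitone hmk)
  have hf₀ : f e₀ = 0 := by
    refine (h.n1 _).1 ((h.ddf _).eq_eps0 fun x hx => ?_)
    have hexp : Tendsto (fun m => Real.exp (-s m)) atTop (𝓝 1) := by
      simpa using hs_lim.neg.rexp
    refine le_of_tendsto hexp ?_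
    filter_upwards [hs_lim.eventually_lt_const hx] with m hm
    simpa [epsc_of_lt hm] using hle₀ m x
  have he₀_zero : e₀ = 0 := (map_eq_zero_iff f hf).1 hf₀
  exact ht.ne (by rw [← he₀, he₀_zero, norm_zero])

lemma exists_decaysAt (h : IsPNSpace V ν τ τs) (harch : IsArchimedean τs)
    (hne : ∀ p, ν p ≠ epsInf) (hf : Function.Injective f) (hs : 0 ≤ s) :
    ∃ t > 0, DecaysAt ν f t s := by
  by_contra! hcon
  choose e he hle using fun k : ℕ =>
    h.exists_smul_epsc_le_of_not_decaysAt (hcon (k + 1) k.cast_add_one_pos)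
  have hk (k : ℕ) : (k + 1 : ℝ) ≠ 0 := k.cast_add_one_ne_zero
  have hunit (k : ℕ) : ‖(k + 1 : ℝ)⁻¹ • e k‖ = 1 := by
    rw [norm_smul, he, norm_inv, Real.norm_of_nonneg (by positivity), inv_mul_cancel₀ (hk k)]
  obtain ⟨e₀, he₀, hclosed⟩ := h.exists_norm_eq_forall_le harch hne f hunit
  have hle₀ {c : ℝ} (hc : 0 ≤ c) : Real.exp (-s) • epsc s ≤ ν (c • f e₀) := by
    refine hclosed _ (ddf_exp_neg_smul_epsc hs) c ?_
    filter_upwards [eventually_ge_atTop ⌈c⌉₊] with k hck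
    have hck' : c ≤ k + 1 := (Nat.ceil_le.1 hck).trans (lt_add_one _).le
    calc Real.exp (-s) • epsc s ≤ ν (f (e k)) := hle k s le_rfl
      _ = ν ((k + 1 : ℝ) • f ((k + 1 : ℝ)⁻¹ • e k)) := by rw [← map_smul, smul_inv_smul₀ (hk k)]
      _ ≤ ν (c • f ((k + 1 : ℝ)⁻¹ • e k)) := h.smul_le_smul _ (abs_le_abs_of_nonneg hc hck')
  have hf₀ : f e₀ ≠ 0 := fun hzero => by
    rw [(map_eq_zero_iff f hf).1 hzero, norm_zero] at he₀
    exact zero_ne_one he₀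
  refine (Real.exp_pos (-s)).not_ge
    (ge_of_tendsto (h.tendsto_smul_atTop harch hf₀ (s + 1)) ?_)
  filter_upwards [eventually_ge_atTop 0] with c hc
  simpa [epsc_of_lt (lt_add_one s)] using hle₀ hc (s + 1)

end Injective

/-- The largest `s` at which `ν` decays on the sphere of radius `t`, capped at `t` so that the
supremum is finite; it is `0` for negative `t`. -/
def decayRate (ν : V → ℝ → ℝ) (f : E →ₗ[ℝ] V) (t : ℝ) : ℝ :=
  sSup {s | s ∈ Set.Icc 0 t ∧ DecaysAt ν f t s}

lemma le_decayRate (hs : 0 ≤ s) (hst : s ≤ t) (hdec : DecaysAt ν f t s) : s ≤ decayRate ν f t :=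
  le_csSup ⟨t, fun _ hr => hr.1.2⟩ ⟨⟨hs, hst⟩, hdec⟩

lemma decayRate_nonneg (ν : V → ℝ → ℝ) (f : E →ₗ[ℝ] V) (t : ℝ) : 0 ≤ decayRate ν f t :=
  Real.sSup_nonneg fun _ hs => hs.1.1

lemma decayRate_mono (h : IsPNSpace V ν τ τs) (f : E →ₗ[ℝ] V) : Monotone (decayRate ν f) := by
  refine fun t t' htt' => Real.sSup_le (fun s hs => ?_) (decayRate_nonneg ν f t')
  obtain ⟨⟨hs0, hst⟩, hdec⟩ := hs
  rcases le_or_gt t 0 with ht | ht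
  · exact (hst.trans ht).trans (decayRate_nonneg ν f t')
  · exact le_decayRate hs0 (hst.trans htt') (h.decaysAt_mono hdec ht htt' le_rfl)

lemma decaysAt_of_lt_decayRate (h : IsPNSpace V ν τ τs) (ht : 0 < t) (hs : s < decayRate ν f t) :
    DecaysAt ν f t s := by
  have hzero : DecaysAt ν f t 0 := fun e _ =>
    ((h.ddf _).eq_zero le_rfl).trans_le (Real.exp_pos _).le
  obtain ⟨s', hs', hlt⟩ := exists_lt_of_lt_csSup
    (s := {s | s ∈ Set.Icc 0 t ∧ DecaysAt ν f t s}) ⟨0, ⟨le_rfl, ht.le⟩, hzero⟩ hs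
  exact h.decaysAt_mono hs'.2 ht le_rfl hlt.le

variable [FiniteDimensional ℝ E]

lemma decayRate_pos (h : IsPNSpace V ν τ τs) (harch : IsArchimedean τs)
    (hne : ∀ p, ν p ≠ epsInf) (hf : Function.Injective f) (ht : 0 < t) : 0 < decayRate ν f t := by
  obtain ⟨s, hs, hdec⟩ := h.exists_pos_decaysAt harch hne hf ht
  exact (lt_min hs ht).trans_le (le_decayRate (lt_min hs ht).le (min_le_right s t)
    (h.decaysAt_mono hdec ht le_rfl (min_le_left s t)))

lemma tendsto_decayRate_atTop (h : IsPNSpace V ν τ τs) (harch : IsArchimedean τs)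
    (hne : ∀ p, ν p ≠ epsInf) (hf : Function.Injective f) :
    Tendsto (decayRate ν f) atTop atTop := by
  refine tendsto_atTop.2 fun b => ?_
  have hb : 0 ≤ max b 0 := le_max_right b 0
  obtain ⟨t, ht, hdec⟩ := h.exists_decaysAt harch hne hf hb
  filter_upwards [eventually_ge_atTop t, eventually_ge_atTop (max b 0)] with t' htt' hbt'
  exact (le_max_left b 0).trans (le_decayRate hb hbt' (h.decaysAt_mono hdec ht htt' le_rfl))

lemma exists_orderIso_le_exp_neg (h : IsPNSpace V ν τ τs) (harch : IsArchimedean τs)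
    (hne : ∀ p, ν p ≠ epsInf) (hf : Function.Injective f) :
    ∃ σ : ℝ ≃o ℝ, σ 0 = 0 ∧ ∀ e, ν (f e) (σ ‖e‖) ≤ Real.exp (-σ ‖e‖) := by
  obtain ⟨σ, hσ, hlt⟩ := exists_orderIso_lt (h.decayRate_mono f) (decayRate_nonneg ν f)
    (fun t => h.decayRate_pos harch hne hf) (h.tendsto_decayRate_atTop harch hne hf)
  refine ⟨σ, hσ, fun e => ?_⟩
  rcases (norm_nonneg e).eq_or_lt with he | he
  · rw [← he, hσ, (h.ddf _).eq_zero le_rfl]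
    exact (Real.exp_pos _).le
  · exact h.decaysAt_of_lt_decayRate he (hlt _ he) e rfl

end IsPNSpace

theorem statement7_general {V : Type} [AddCommGroup V] [Module ℝ V] {ν : V → ℝ → ℝ}
    {τ τs : (ℝ → ℝ) → (ℝ → ℝ) → (ℝ → ℝ)} (h : IsPNSpace V ν τ τs) (harch : IsArchimedean τs)
    (hne : ∀ p : V, ν p ≠ epsInf) {E : Type*} [NormedAddCommGroup E] [NormedSpace ℝ E]
    [FiniteDimensional ℝ E] {f : E →ₗ[ℝ] V} (hf : Function.Injective f) :
    ∃ (ν' : ℝ → ℝ → ℝ) (τ' τ's : (ℝ → ℝ) → (ℝ → ℝ) → (ℝ → ℝ)),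
      IsPNSpace ℝ ν' τ' τ's ∧ IsArchimedean τ's ∧ (∀ r : ℝ, ν' r ≠ epsInf) ∧
      ∀ e, ν (f e) ≤ ν' ‖e‖ := by
  obtain ⟨σ, hσ, hdecay⟩ := h.exists_orderIso_le_exp_neg harch hne hf
  have hσ' : σ.symm 0 = 0 := orderIso_symm_apply_of_fixed hσ
  have hψ0 : expConj σ 0 = 0 := expConj_zero σ
  have hψ1 : expConj σ 1 = 1 := expConj_one hσ
  refine ⟨fun r => reparam σ.symm (expConj σ) (truncExp |r|), _, _,
    isPNSpace_truncExp_abs.reparam hσ' hψ0 hψ1,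
    isArchimedean_supConv.reparamTriangle hσ' hψ0 hψ1,
    fun r => ((reparam_injective _ _).ne_iff' (reparam_epsInf hψ0)).2 (truncExp_ne_epsInf |r|),
    fun e => ?_⟩
  simpa only [abs_norm] using (h.ddf _).le_reparam_truncExp hσ (hdecay e)

/-- For a linearly independent family in a strong-TVS PN space there are
`c ≠ 0` and a strong-TVS probabilistic norm `ν'` on `ℝ` with
`ν (∑ αⱼ pⱼ) ≤ ν' (c (∑ |αⱼ|))`. -/
theorem statement7 {V : Type} [AddCommGroup V] [Module ℝ V]
    (ν : V → ℝ → ℝ) (τ τs : (ℝ → ℝ) → (ℝ → ℝ) → (ℝ → ℝ))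
    (h : IsPNSpace V ν τ τs) (harch : IsArchimedean τs)
    (hne : ∀ p : V, ν p ≠ epsInf)
    {n : ℕ} (p : Fin n → V) (hli : LinearIndependent ℝ p) :
    ∃ c : ℝ, c ≠ 0 ∧
      ∃ (ν' : ℝ → ℝ → ℝ) (τ' τ's : (ℝ → ℝ) → (ℝ → ℝ) → (ℝ → ℝ)),
        IsPNSpace ℝ ν' τ' τ's ∧ IsArchimedean τ's ∧ (∀ r : ℝ, ν' r ≠ epsInf) ∧
        ∀ α : Fin n → ℝ,
          ν (∑ j, α j • p j) ≤ ν' (c * ∑ j, |α j|) := by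
  obtain ⟨ν', τ', τ's, hpn, harch', hne', hle⟩ := statement7_general h harch hne
    (f := Fintype.linearCombination ℝ p ∘ₗ (WithLp.linearEquiv 1 ℝ (Fin n → ℝ)).toLinearMap)
    ((linearIndependent_iff_injective_fintypeLinearCombination.1 hli).comp
      (WithLp.linearEquiv 1 ℝ (Fin n → ℝ)).injective)
  refine ⟨1, one_ne_zero, ν', τ', τ's, hpn, harch', hne', fun α => ?_⟩
  simpa [PiLp.norm_eq_of_L1, Fintype.linearCombination_apply] using hle (WithLp.toLp 1 α)

end
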